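/- Let R = k[x_0,...,x_n] with n ≥ 2, and let I_1, I_2 be homogeneous ideals of height 2 such that R/I_1 and R/I_2 are Cohen-Macaulay. Suppose F_1 ∈ I_1, F_2 ∈ I_2 are homogeneous and form a regular sequence. Then I := F_2 I_1 + F_1 I_2 has height 2 and R/I is Cohen-Macaulay. -/

import Mathlib

open MvPolynomial

/-- The height of an ideal: the infimum of the heights of the primes containing it. -/
noncomputable def idealHeight {R : Type*} [CommRing R] (I : Ideal R) : ℕ∞ :=
  ⨅ p : {p : PrimeSpectrum R // I ≤ p.asIdeal}, Order.height p.1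

/-- For a homogeneous ideal `I` of height `c` in `k[x₀,…,xₙ]`, Cohen-Macaulayness of
`R/I` expressed via the existence of a regular sequence of length `(n+1) - c` in the
irrelevant maximal ideal acting on `R/I`. -/
def quotientIsCM (k : Type*) [Field k] (n : ℕ)
    (I : Ideal (MvPolynomial (Fin (n + 1)) k)) (c : ℕ) : Prop :=
  ∃ rs : List (MvPolynomial (Fin (n + 1)) k), rs.length = (n + 1) - c ∧
    (∀ r ∈ rs, r ∈ Ideal.span (Set.range X)) ∧
    RingTheory.Sequence.IsRegular (MvPolynomial (Fin (n + 1)) k ⧸ I) rs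

/-!
Every prime containing `F₂ I₁ + F₁ I₂` contains `I₁`, `I₂`, or both `F₁` and `F₂`; these three
ideals have height at least two, the last because `F₁, F₂` is a regular sequence. For the depth,
write `d = depth R/I₁ = depth R/I₂`, so that `depth R ≥ d + 2`. Comparing depths along
`0 → Iⱼ → R → R/Iⱼ → 0` gives depth at least `d + 1` to `I₁` and `I₂`, then
`0 → R → I₁ ⊕ I₂ → F₂ I₁ + F₁ I₂ → 0` gives it to the liaison addition `I`, and
`0 → I → R → R/I → 0` gives depth at least `d` to `R/I`. Depth is measured by the vanishing of
`Ext(R/m, -)`, which agrees with the existence of regular sequences by Rees' theorem.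
-/

universe u

section Height

variable {R : Type*} [CommRing R]

lemma le_height_iff_forall_isPrime {I : Ideal R} {c : ℕ∞} :
    c ≤ I.height ↔ ∀ p : Ideal R, p.IsPrime → I ≤ p → c ≤ p.height := by
  refine ⟨fun hc p _ hIp => hc.trans (Ideal.height_mono hIp), fun h => ?_⟩
  rw [Ideal.height_eq_inf_minimalPrimes]
  exact le_iInf₂ fun p hp => h p hp.isPrime hp.le

lemma ne_top_of_height_ne_top {I : Ideal R} (hI : I.height ≠ ⊤) : I ≠ ⊤ :=
  fun h => hI (h ▸ Ideal.height_top)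

lemma idealHeight_eq_height (I : Ideal R) : idealHeight I = I.height := by
  apply le_antisymm
  · refine le_height_iff_forall_isPrime.2 fun p hp hIp => ?_
    rw [PrimeSpectrum.height_eq_orderHeight ⟨p, hp⟩]
    exact iInf_le (fun q : {q : PrimeSpectrum R // I ≤ q.asIdeal} => Order.height q.1)
      ⟨⟨p, hp⟩, hIp⟩
  · refine le_iInf fun p => ?_
    rw [← PrimeSpectrum.height_eq_orderHeight]
    exact Ideal.height_mono p.2

lemma notMem_of_isSMulRegular_quotient_of_mem_minimalPrimes {I p : Ideal R} {r : R}
    (hr : IsSMulRegular (R ⧸ I) r) (hp : p ∈ I.minimalPrimes) : r ∉ p :=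
  hr.notMem_of_mem_minimalPrimes (by rwa [Ideal.annihilator_quotient])

lemma height_add_one_le_height_sup_span_singleton {I : Ideal R} {r : R}
    (hr : IsSMulRegular (R ⧸ I) r) : I.height + 1 ≤ (I ⊔ Ideal.span {r}).height := by
  refine le_height_iff_forall_isPrime.2 fun p hp hIp => ?_
  obtain ⟨hI, hrp⟩ := sup_le_iff.1 hIp
  obtain ⟨q, hq, hqp⟩ := Ideal.exists_minimalPrimes_le hI
  have := hq.isPrime
  have hrq : r ∉ q := notMem_of_isSMulRegular_quotient_of_mem_minimalPrimes hr hq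
  have hlt : q < p := lt_of_le_of_ne hqp <| by
    rintro rfl
    exact hrq ((Ideal.span_singleton_le_iff_mem _).1 hrp)
  calc I.height + 1 ≤ q.height + 1 := by gcongr; exact hq.le
    _ ≤ p.height := Ideal.height_add_one_le_of_lt_of_isPrime hlt

lemma isWeaklyRegular_append_singleton_iff {rs : List R} {r : R} :
    RingTheory.Sequence.IsWeaklyRegular R (rs ++ [r]) ↔
      RingTheory.Sequence.IsWeaklyRegular R rs ∧ IsSMulRegular (R ⧸ Ideal.ofList rs) r := by
  rw [RingTheory.Sequence.isWeaklyRegular_append_iff, RingTheory.Sequence.isWeaklyRegular_cons_iff,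
    smul_eq_mul, Ideal.mul_top]
  simp only [RingTheory.Sequence.IsWeaklyRegular.nil, and_true]

lemma length_le_height_ofList {rs : List R} (hrs : RingTheory.Sequence.IsWeaklyRegular R rs) :
    rs.length ≤ (Ideal.ofList rs).height := by
  induction rs using List.reverseRecOn with
  | nil => simp
  | append_singleton rs r ih =>
    obtain ⟨hrs, hr⟩ := isWeaklyRegular_append_singleton_iff.1 hrs
    rw [List.length_append, List.length_singleton, Nat.cast_add, Nat.cast_one,
      Ideal.ofList_append, Ideal.ofList_singleton]
    calc (rs.length : ℕ∞) + 1 ≤ (Ideal.ofList rs).height + 1 := by gcongr; exact ih hrs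
      _ ≤ (Ideal.ofList rs ⊔ Ideal.span {r}).height :=
        height_add_one_le_height_sup_span_singleton hr

end Height

section LiaisonAddition

variable {R : Type*} [CommRing R]

/-- The liaison addition `F₂ I₁ + F₁ I₂` of two ideals along a pair of elements. -/
def liaisonAddition (I₁ I₂ : Ideal R) (F₁ F₂ : R) : Ideal R :=
  Ideal.span {F₂} * I₁ + Ideal.span {F₁} * I₂

variable {I₁ I₂ : Ideal R} {F₁ F₂ : R}

lemma mem_liaisonAddition {x : R} :
    x ∈ liaisonAddition I₁ I₂ F₁ F₂ ↔ ∃ a ∈ I₁, ∃ b ∈ I₂, F₂ * a + F₁ * b = x := by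
  simp [liaisonAddition, Submodule.mem_sup, Ideal.mem_span_singleton_mul]

lemma liaisonAddition_le_left (h₁ : F₁ ∈ I₁) : liaisonAddition I₁ I₂ F₁ F₂ ≤ I₁ :=
  sup_le Ideal.mul_le_right (Ideal.mul_le_left.trans ((Ideal.span_singleton_le_iff_mem _).2 h₁))

lemma liaisonAddition_le_right (h₂ : F₂ ∈ I₂) : liaisonAddition I₁ I₂ F₁ F₂ ≤ I₂ :=
  sup_le (Ideal.mul_le_left.trans ((Ideal.span_singleton_le_iff_mem _).2 h₂)) Ideal.mul_le_right

lemma liaisonAddition_le_ofList : liaisonAddition I₁ I₂ F₁ F₂ ≤ Ideal.ofList [F₁, F₂] := by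
  rw [Ideal.ofList_cons, Ideal.ofList_singleton, sup_comm]
  exact sup_le_sup Ideal.mul_le_left Ideal.mul_le_left

lemma le_or_le_or_ofList_le_of_liaisonAddition_le {p : Ideal R} [hp : p.IsPrime]
    (h : liaisonAddition I₁ I₂ F₁ F₂ ≤ p) : I₁ ≤ p ∨ I₂ ≤ p ∨ Ideal.ofList [F₁, F₂] ≤ p := by
  obtain ⟨h₁, h₂⟩ := sup_le_iff.1 h
  rw [hp.mul_le] at h₁ h₂
  rw [Ideal.ofList_cons, Ideal.ofList_singleton, sup_le_iff]
  tauto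

lemma height_liaisonAddition (h₁ : F₁ ∈ I₁) (h₂ : F₂ ∈ I₂) :
    (liaisonAddition I₁ I₂ F₁ F₂).height =
      I₁.height ⊓ (I₂.height ⊓ (Ideal.ofList [F₁, F₂]).height) := by
  apply le_antisymm
  · exact le_inf (Ideal.height_mono (liaisonAddition_le_left h₁)) <|
      le_inf (Ideal.height_mono (liaisonAddition_le_right h₂))
        (Ideal.height_mono liaisonAddition_le_ofList)
  · refine le_height_iff_forall_isPrime.2 fun p hp hIp => ?_
    simp only [inf_le_iff]
    exact (le_or_le_or_ofList_le_of_liaisonAddition_le hIp).imp Ideal.height_mono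
      (Or.imp Ideal.height_mono Ideal.height_mono)

lemma isWeaklyRegular_pair_iff {a b : R} :
    RingTheory.Sequence.IsWeaklyRegular R [a, b] ↔
      IsSMulRegular R a ∧ ∀ x, a ∣ b * x → a ∣ x := by
  rw [← List.singleton_append, isWeaklyRegular_append_singleton_iff,
    RingTheory.Sequence.isWeaklyRegular_singleton_iff, isSMulRegular_quotient_iff_mem_of_smul_mem,
    Ideal.ofList_singleton]
  simp only [Ideal.mem_span_singleton, smul_eq_mul]

lemma exists_eq_mul_of_mul_add_mul_eq_zero {a b x y : R}
    (hab : RingTheory.Sequence.IsWeaklyRegular R [a, b]) (hxy : b * x + a * y = 0) :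
    ∃ c, x = a * c ∧ y = -(b * c) := by
  obtain ⟨ha, hb⟩ := isWeaklyRegular_pair_iff.1 hab
  obtain ⟨c, rfl⟩ := hb x ⟨-y, by linear_combination hxy⟩
  exact ⟨c, rfl, ha (by simp only [smul_eq_mul]; linear_combination hxy)⟩

/-- The syzygy map `R → I₁ ⊕ I₂`, `c ↦ (c F₁, -c F₂)`, the left map of the exact sequence
presenting the liaison addition. -/
def liaisonSyzygy (F₁ : I₁) (F₂ : I₂) : R →ₗ[R] I₁ × I₂ :=
  (LinearMap.toSpanSingleton R I₁ F₁).prod (LinearMap.toSpanSingleton R I₂ (-F₂))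

variable (I₁ I₂ F₁ F₂) in
/-- The surjection `I₁ ⊕ I₂ → F₂ I₁ + F₁ I₂`, `(a, b) ↦ F₂ a + F₁ b`, the right map of the exact
sequence presenting the liaison addition. -/
def liaisonProj : I₁ × I₂ →ₗ[R] liaisonAddition I₁ I₂ F₁ F₂ :=
  ((F₂ • I₁.subtype).coprod (F₁ • I₂.subtype)).codRestrict _ fun x =>
    mem_liaisonAddition.2 ⟨x.1, x.1.2, x.2, x.2.2, by simp⟩

@[simp]
lemma coe_liaisonProj (x : I₁ × I₂) :
    (liaisonProj I₁ I₂ F₁ F₂ x : R) = F₂ * x.1 + F₁ * x.2 := by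
  simp [liaisonProj]

lemma liaisonProj_surjective : Function.Surjective (liaisonProj I₁ I₂ F₁ F₂) := by
  rintro ⟨x, hx⟩
  obtain ⟨a, ha, b, hb, rfl⟩ := mem_liaisonAddition.1 hx
  exact ⟨(⟨a, ha⟩, ⟨b, hb⟩), Subtype.ext (coe_liaisonProj _)⟩

lemma liaisonSyzygy_injective {F₁ : I₁} (F₂ : I₂) (h : IsSMulRegular R (F₁ : R)) :
    Function.Injective (liaisonSyzygy F₁ F₂) := fun c d hcd =>
  h <| by simpa [liaisonSyzygy, mul_comm] using congrArg (fun x => (x.1 : R)) hcd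

lemma exact_liaisonSyzygy_liaisonProj {F₁ : I₁} {F₂ : I₂}
    (h : RingTheory.Sequence.IsWeaklyRegular R [(F₁ : R), (F₂ : R)]) :
    Function.Exact (liaisonSyzygy F₁ F₂) (liaisonProj I₁ I₂ F₁ F₂) := by
  intro x
  rw [← Subtype.coe_inj, coe_liaisonProj]
  constructor
  · intro hx
    obtain ⟨c, ha, hb⟩ := exists_eq_mul_of_mul_add_mul_eq_zero h hx
    exact ⟨c, Prod.ext (Subtype.ext (by simp [liaisonSyzygy, ha, mul_comm]))
      (Subtype.ext (by simp [liaisonSyzygy, hb, mul_comm]))⟩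
  · rintro ⟨c, rfl⟩
    simp only [liaisonSyzygy, LinearMap.prod_apply, Function.prod_apply,
      LinearMap.toSpanSingleton_apply, smul_neg, NegMemClass.coe_neg, SetLike.val_smul, smul_eq_mul,
      ZeroMemClass.coe_zero]
    ring

end LiaisonAddition

section Depth

open CategoryTheory Abelian

variable {R : Type u} [CommRing R]

/-- `HasDepthGE m M d` says that the `m`-depth (grade) of `M` is at least `d`, in the homological
form `Extⁱ(R/m, M) = 0` for all `i < d`. -/
def HasDepthGE (m : Ideal R) (M : Type u) [AddCommGroup M] [Module R M] (d : ℕ) : Prop :=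
  ∀ i < d, Subsingleton (Ext (ModuleCat.of R (R ⧸ m)) (ModuleCat.of R M) i)

/-- `HasRegularSequence m M d` says that `m` contains an `M`-regular sequence of length `d`; it is
the elementary form of `HasDepthGE m M d`. -/
def HasRegularSequence {R : Type*} [CommRing R] (m : Ideal R) (M : Type*) [AddCommGroup M]
    [Module R M] (d : ℕ) : Prop :=
  ∃ rs : List R, rs.length = d ∧ (∀ r ∈ rs, r ∈ m) ∧ RingTheory.Sequence.IsRegular M rs

variable {m : Ideal R} {A B C M : Type u} [AddCommGroup A] [AddCommGroup B] [AddCommGroup C]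
  [AddCommGroup M] [Module R A] [Module R B] [Module R C] [Module R M] {d e : ℕ}

theorem hasDepthGE_iff_hasRegularSequence [IsNoetherianRing R] [Module.Finite R M]
    (hM : m • (⊤ : Submodule R M) < ⊤) : HasDepthGE m M d ↔ HasRegularSequence m M d := by
  have hsupp : Module.support R (R ⧸ m) = PrimeSpectrum.zeroLocus m := by
    rw [Module.support_eq_zeroLocus, Ideal.annihilator_quotient]
  constructor
  · exact ModuleCat.exists_isRegular_of_exists_subsingleton_ext m d (ModuleCat.of R M) hM
      (ModuleCat.of R (R ⧸ m)) hsupp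
  · rintro ⟨rs, rfl, hmem, hreg⟩
    exact ModuleCat.subsingleton_ext_of_exists_isRegular m (ModuleCat.of R (R ⧸ m)) hsupp.subset
      (ModuleCat.of R M) hM rs hmem hreg

namespace HasDepthGE

lemma mono (h : HasDepthGE m M d) (hed : e ≤ d) : HasDepthGE m M e :=
  fun i hi => h i (hi.trans_le hed)

section ShortExact

variable {f : A →ₗ[R] B} {g : B →ₗ[R] C} (hf : Function.Injective f) (hg : Function.Surjective g)
  (hfg : Function.Exact f g)

include hf hg hfg

private lemma shortExact :
    (ModuleCat.shortComplexOfCompEqZero f g hfg.linearMap_comp_eq_zero).ShortExact :=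
  ModuleCat.shortComplex_shortExact _ hfg hf hg

lemma of_exact_left (hB : HasDepthGE m B (d + 1)) (hC : HasDepthGE m C d) :
    HasDepthGE m A (d + 1) := by
  refine fun i hi => subsingleton_of_forall_eq 0 fun x => ?_
  have hS := shortExact hf hg hfg
  cases i with
  | zero =>
    have := hS.mono_f
    exact Ext.postcomp_mk₀_injective_of_mono _
      (ModuleCat.shortComplexOfCompEqZero f g hfg.linearMap_comp_eq_zero).f ((hB 0 hi).elim _ _)
  | succ j =>
    obtain ⟨y, rfl⟩ := Ext.covariant_sequence_exact₁ _ hS x ((hB _ hi).elim _ _) rfl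
    rw [(hC j (by omega)).elim y 0, Ext.zero_comp]

lemma of_exact_middle (hA : HasDepthGE m A d) (hC : HasDepthGE m C d) : HasDepthGE m B d := by
  refine fun i hi => subsingleton_of_forall_eq 0 fun x => ?_
  obtain ⟨y, rfl⟩ := Ext.covariant_sequence_exact₂ _ (shortExact hf hg hfg) x
    ((hC i hi).elim _ _)
  rw [(hA i hi).elim y 0, Ext.zero_comp]

lemma of_exact_right (hA : HasDepthGE m A (d + 1)) (hB : HasDepthGE m B d) :
    HasDepthGE m C d := by
  refine fun i hi => subsingleton_of_forall_eq 0 fun x => ?_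
  obtain ⟨y, rfl⟩ := Ext.covariant_sequence_exact₃ _ (shortExact hf hg hfg) x rfl
    ((hA (i + 1) (by omega)).elim _ _)
  rw [(hB i hi).elim y 0, Ext.zero_comp]

end ShortExact

lemma prod (hA : HasDepthGE m A d) (hB : HasDepthGE m B d) : HasDepthGE m (A × B) d :=
  of_exact_middle LinearMap.inl_injective LinearMap.snd_surjective Function.Exact.inl_snd hA hB

lemma submodule {N : Submodule R M} (hM : HasDepthGE m M (d + 1)) (hMN : HasDepthGE m (M ⧸ N) d) :
    HasDepthGE m N (d + 1) :=
  of_exact_left N.subtype_injective N.mkQ_surjective (LinearMap.exact_subtype_mkQ N) hM hMN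

lemma quotient {N : Submodule R M} (hN : HasDepthGE m N (d + 1)) (hM : HasDepthGE m M d) :
    HasDepthGE m (M ⧸ N) d :=
  of_exact_right N.subtype_injective N.mkQ_surjective (LinearMap.exact_subtype_mkQ N) hN hM

theorem quotient_liaisonAddition {I₁ I₂ : Ideal R} {F₁ F₂ : R} (h₁ : F₁ ∈ I₁) (h₂ : F₂ ∈ I₂)
    (hF : RingTheory.Sequence.IsWeaklyRegular R [F₁, F₂]) (hR : HasDepthGE m R (d + 2))
    (hI₁ : HasDepthGE m (R ⧸ I₁) d) (hI₂ : HasDepthGE m (R ⧸ I₂) d) :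
    HasDepthGE m (R ⧸ liaisonAddition I₁ I₂ F₁ F₂) d := by
  have hprod : HasDepthGE m (I₁ × I₂) (d + 1) :=
    (submodule (hR.mono (by omega)) hI₁).prod (submodule (hR.mono (by omega)) hI₂)
  have hI : HasDepthGE m (liaisonAddition I₁ I₂ F₁ F₂) (d + 1) :=
    of_exact_right
      (liaisonSyzygy_injective (F₁ := ⟨F₁, h₁⟩) ⟨F₂, h₂⟩ (isWeaklyRegular_pair_iff.1 hF).1)
      liaisonProj_surjective (exact_liaisonSyzygy_liaisonProj hF) hR hprod
  exact hI.quotient (hR.mono (by omega))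

end HasDepthGE

lemma smul_top_quotient_lt_top {R : Type*} [CommRing R] {I m : Ideal R} (hI : I ≤ m)
    (hm : m ≠ ⊤) : m • (⊤ : Submodule R (R ⧸ I)) < ⊤ := by
  refine lt_top_iff_ne_top.2 fun htop => hm ?_
  have hcomap := congrArg (Submodule.comap (Submodule.mkQ I)) htop
  rw [Submodule.comap_smul_top_of_surjective m _ (Submodule.mkQ_surjective _)] at hcomap
  simpa [hI] using hcomap

theorem hasDepthGE_quotient_iff_hasRegularSequence [IsNoetherianRing R] {I : Ideal R} (hI : I ≤ m)
    (hm : m ≠ ⊤) : HasDepthGE m (R ⧸ I) d ↔ HasRegularSequence m (R ⧸ I) d :=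
  hasDepthGE_iff_hasRegularSequence (M := R ⧸ I) (smul_top_quotient_lt_top hI hm)

end Depth

section Polynomial

variable {σ k : Type*}

lemma mem_idealOfVars_iff [CommSemiring k] {p : MvPolynomial σ k} :
    p ∈ idealOfVars σ k ↔ coeff 0 p = 0 := by
  rw [← pow_one (idealOfVars σ k), mem_pow_idealOfVars_iff']
  simp [Finsupp.degree_eq_zero_iff]

lemma idealOfVars_ne_top [CommSemiring k] [Nontrivial k] : idealOfVars σ k ≠ ⊤ := by
  rw [Ne, Ideal.eq_top_iff_one, mem_idealOfVars_iff]
  simp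

lemma le_idealOfVars_of_isHomogeneous [Field k] {I : Ideal (MvPolynomial σ k)}
    (hhom : ∀ p ∈ I, ∀ m : ℕ, homogeneousComponent m p ∈ I) (hI : I ≠ ⊤) :
    I ≤ idealOfVars σ k := by
  intro p hp
  rw [mem_idealOfVars_iff]
  by_contra hc
  have hconst : C (coeff 0 p) ∈ I := homogeneousComponent_zero p ▸ hhom p hp 0
  exact hI (Ideal.eq_top_of_isUnit_mem _ hconst ((isUnit_iff_ne_zero.2 hc).map C))

lemma isSMulRegular_X_quotient_span_X_image [CommRing k] {s : Set σ} {i : σ} (hi : i ∉ s) :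
    IsSMulRegular (MvPolynomial σ k ⧸ Ideal.span (X '' s : Set (MvPolynomial σ k)))
      (X i : MvPolynomial σ k) := by
  rw [isSMulRegular_quotient_iff_mem_of_smul_mem]
  intro p hp
  rw [smul_eq_mul, mem_ideal_span_X_image] at hp
  rw [mem_ideal_span_X_image]
  intro m hm
  obtain ⟨j, hj, hjm⟩ := hp (Finsupp.single i 1 + m) (by simpa using hm)
  have hij : i ≠ j := fun h => hi (h ▸ hj)
  exact ⟨j, hj, by simpa [Finsupp.single_eq_of_ne' hij] using hjm⟩

lemma ofList_take_ofFn_X [CommSemiring k] (n i : ℕ) :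
    Ideal.ofList ((List.ofFn (X : Fin n → MvPolynomial (Fin n) k)).take i) =
      Ideal.span (X '' {j : Fin n | j.1 < i}) := by
  rw [Ideal.ofList]
  congr 1
  ext r
  simp only [Set.mem_ofPred_eq, List.mem_take_iff_getElem, List.getElem_ofFn, List.length_ofFn,
    Set.mem_image]
  constructor
  · rintro ⟨j, hj, rfl⟩
    exact ⟨⟨j, by omega⟩, by simp only; omega, rfl⟩
  · rintro ⟨j, hj, rfl⟩
    exact ⟨j, by omega, rfl⟩

theorem isRegular_ofFn_X [CommRing k] [Nontrivial k] (n : ℕ) :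
    RingTheory.Sequence.IsRegular (MvPolynomial (Fin n) k)
      (List.ofFn (X : Fin n → MvPolynomial (Fin n) k)) := by
  refine ⟨⟨fun i hi => ?_⟩, ?_⟩
  · rw [smul_eq_mul, Ideal.mul_top, ofList_take_ofFn_X, List.getElem_ofFn]
    exact isSMulRegular_X_quotient_span_X_image (by simp)
  · have hvars : Ideal.ofList (List.ofFn (X : Fin n → MvPolynomial (Fin n) k)) =
        idealOfVars (Fin n) k :=
      congrArg Ideal.span (Set.ext fun r => List.mem_ofFn)
    rw [smul_eq_mul, Ideal.mul_top, hvars]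
    exact idealOfVars_ne_top.symm

theorem hasRegularSequence_idealOfVars [CommRing k] [Nontrivial k] (n : ℕ) :
    HasRegularSequence (idealOfVars (Fin n) k) (MvPolynomial (Fin n) k) n :=
  ⟨List.ofFn X, List.length_ofFn,
    fun _ hr => Ideal.subset_span (List.mem_ofFn.1 hr), isRegular_ofFn_X n⟩

end Polynomial

theorem liaison_addition_is_CM_general {R : Type u} [CommRing R] [IsNoetherianRing R]
    {m I₁ I₂ : Ideal R} {F₁ F₂ : R} {d : ℕ} (hm : m ≠ ⊤) (hI₁ : I₁ ≤ m) (hI₂ : I₂ ≤ m)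
    (hR : HasRegularSequence m R (d + 2))
    (hht₁ : I₁.height = 2) (hht₂ : I₂.height = 2)
    (hcm₁ : HasRegularSequence m (R ⧸ I₁) d) (hcm₂ : HasRegularSequence m (R ⧸ I₂) d)
    (h₁ : F₁ ∈ I₁) (h₂ : F₂ ∈ I₂) (hF : RingTheory.Sequence.IsWeaklyRegular R [F₁, F₂]) :
    (liaisonAddition I₁ I₂ F₁ F₂).height = 2 ∧
      HasRegularSequence m (R ⧸ liaisonAddition I₁ I₂ F₁ F₂) d := by
  constructor
  · have hle : (2 : ℕ∞) ≤ (Ideal.ofList [F₁, F₂]).height := by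
      simpa using length_le_height_ofList hF
    rw [height_liaisonAddition h₁ h₂, hht₁, hht₂, inf_eq_left.2 hle, inf_idem]
  · have hmR : m • (⊤ : Submodule R R) < ⊤ := by simpa [lt_top_iff_ne_top] using hm
    have hI : liaisonAddition I₁ I₂ F₁ F₂ ≤ m := (liaisonAddition_le_left h₁).trans hI₁
    rw [← hasDepthGE_iff_hasRegularSequence hmR] at hR
    rw [← hasDepthGE_quotient_iff_hasRegularSequence hI₁ hm] at hcm₁
    rw [← hasDepthGE_quotient_iff_hasRegularSequence hI₂ hm] at hcm₂
    rw [← hasDepthGE_quotient_iff_hasRegularSequence hI hm]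
    exact hR.quotient_liaisonAddition h₁ h₂ hF hcm₁ hcm₂

/-- Liaison addition of two ACM codimension-two homogeneous ideals is again of height 2
with Cohen-Macaulay quotient. -/
theorem liaison_addition_is_CM
    {k : Type*} [Field k] (n : ℕ) (hn : 2 ≤ n)
    (I₁ I₂ : Ideal (MvPolynomial (Fin (n + 1)) k))
    (hhom1 : ∀ p ∈ I₁, ∀ m : ℕ, homogeneousComponent m p ∈ I₁)
    (hhom2 : ∀ p ∈ I₂, ∀ m : ℕ, homogeneousComponent m p ∈ I₂)
    (hht1 : idealHeight I₁ = 2) (hht2 : idealHeight I₂ = 2)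
    (hcm1 : quotientIsCM k n I₁ 2) (hcm2 : quotientIsCM k n I₂ 2)
    (F₁ F₂ : MvPolynomial (Fin (n + 1)) k) (d₁ d₂ : ℕ)
    (h1 : F₁ ∈ I₁) (h2 : F₂ ∈ I₂)
    (hd1 : F₁.IsHomogeneous d₁) (hd2 : F₂.IsHomogeneous d₂)
    (hreg : RingTheory.Sequence.IsRegular (MvPolynomial (Fin (n + 1)) k) [F₁, F₂]) :
    idealHeight (Ideal.span {F₂} * I₁ + Ideal.span {F₁} * I₂) = 2 ∧
      quotientIsCM k n (Ideal.span {F₂} * I₁ + Ideal.span {F₁} * I₂) 2 := by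
  simp only [idealHeight_eq_height] at hht1 hht2 ⊢
  exact liaison_addition_is_CM_general idealOfVars_ne_top
    (le_idealOfVars_of_isHomogeneous hhom1 (ne_top_of_height_ne_top (by simp [hht1])))
    (le_idealOfVars_of_isHomogeneous hhom2 (ne_top_of_height_ne_top (by simp [hht2])))
    (by rw [Nat.sub_add_cancel (by omega)]; exact hasRegularSequence_idealOfVars (n + 1))
    hht1 hht2 hcm1 hcm2 h1 h2 hreg.toIsWeaklyRegular
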